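/- Let H ∈ ℝ^{n×n²} be energy-preserving. The set of matrices H̃ ∈ ℝ^{n×n²} with skew-symmetric blocks H̃_i = −H̃_iᵀ satisfying H(x⊗x) = H̃(x⊗x) for all x ∈ ℝⁿ is a nonempty affine subspace of ℝ^{n×n²} of dimension n(n−1)(n−2)/6 = n³/6 − n²/2 + n/3. -/

import Mathlib

/-!
Attach to `H` the trilinear form `T x y z = ∑ i, x i * yᵀ H_i z`. The blocks are skew-symmetric iff
`T x y y = 0`, the quadratic map of `H` is encoded by the values `T x y x`, and energy preservation
says `T x x x = 0`.

A solution exists because polarizing `T x x x = 0` gives `T x x y + T x y x + T y x x = 0`, so that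
`S x y z = (T x y z + T z y x - T x z y - T y z x) / 3` is skew in `y, z` and satisfies
`S x y x = T x y x`. Two solutions differ by a trilinear form vanishing on all `(x, y, y)` and all
`(x, y, x)`, that is, by an alternating one, and the alternating trilinear forms are the dual of
`⋀³ ℝⁿ`, of dimension `n.choose 3`.
-/

open Matrix

/-- The quadratic map `x ↦ H (x ⊗ x)` for a matrix `H ∈ ℝ^{n×n²}` partitioned into `n`
blocks `H = [H_1, …, H_n]`: `H i` is the `i`-th block and `H i j k` is the entry
`h_{i,(j,k)}`, so that the `j`-th component of `H (x ⊗ x)` is `∑_{i,k} h_{i,(j,k)} x_i x_k`. -/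
def quadMap {n : ℕ} (H : Fin n → Matrix (Fin n) (Fin n) ℝ) (x : Fin n → ℝ) : Fin n → ℝ :=
  fun j => ∑ i, ∑ k, H i j k * (x i * x k)

/-- `H` is energy-preserving if `xᵀ H (x ⊗ x) = 0` for all `x ∈ ℝⁿ`. -/
def EnergyPreserving {n : ℕ} (H : Fin n → Matrix (Fin n) (Fin n) ℝ) : Prop :=
  ∀ x : Fin n → ℝ, ∑ j, x j * quadMap H x j = 0

section Trilinear

variable {R V N : Type*} [CommRing R] [AddCommGroup V] [Module R V] [AddCommGroup N] [Module R N]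

variable (R V N) in
/-- The alternating trilinear maps in curried form, cut out by vanishing when the last two or the
outer two arguments agree: for the trilinear form of a block matrix, the first condition says that
the blocks are skew-symmetric and the second that the quadratic map is zero. -/
def alternatingTrilinear : Submodule R (V →ₗ[R] V →ₗ[R] V →ₗ[R] N) where
  carrier := {T | (∀ x y, T x y y = 0) ∧ ∀ x y, T x y x = 0}
  add_mem' hS hT := by simp_all
  zero_mem' := by simp
  smul_mem' c T hT := by simp_all

lemma mem_alternatingTrilinear {T : V →ₗ[R] V →ₗ[R] V →ₗ[R] N} :
    T ∈ alternatingTrilinear R V N ↔ (∀ x y, T x y y = 0) ∧ ∀ x y, T x y x = 0 :=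
  Iff.rfl

lemma apply_self_left_of_mem_alternatingTrilinear {T : V →ₗ[R] V →ₗ[R] V →ₗ[R] N}
    (hT : T ∈ alternatingTrilinear R V N) (x y : V) : T x x y = 0 := by
  have h : T x (x + y) (x + y) = 0 := hT.1 x (x + y)
  simpa [hT.1 x, hT.2 x] using h

/-- The alternating map `(x, y, z) ↦ T x y z` of a member `T` of `alternatingTrilinear`, with the
three arguments indexed by `Fin 3`. -/
def uncurryAlternating (T : alternatingTrilinear R V N) :
    V [⋀^Fin 3]→ₗ[R] N where
  __ := MultilinearMap.mk' (fun v : Fin 3 → V => T.1 (v 0) (v 1) (v 2))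
    (fun v i x y => by fin_cases i <;> simp)
    (fun v i c x => by fin_cases i <;> simp)
  map_eq_zero_of_eq' v i j hv hij := by
    have h := apply_self_left_of_mem_alternatingTrilinear T.2
    fin_cases i <;> fin_cases j <;> simp_all [T.2.1, T.2.2]

/-- The curried form `x ↦ y ↦ z ↦ f (x, y, z)` of an alternating map in three variables. -/
def curryAlternating (f : V [⋀^Fin 3]→ₗ[R] N) : V →ₗ[R] V →ₗ[R] V →ₗ[R] N :=
  (AlternatingMap.curryLeftLinearMap ∘ₗ f.curryLeft).compr₂
    ((MultilinearMap.ofSubsingletonₗ R R V N (0 : Fin 1)).symm.toLinearMap ∘ₗ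
      AlternatingMap.toMultilinearMapLM)

lemma curryAlternating_apply (f : V [⋀^Fin 3]→ₗ[R] N) (x y z : V) :
    curryAlternating f x y z = f ![x, y, z] := by
  rw [cons_fin_one]
  rfl

lemma curryAlternating_mem (f : V [⋀^Fin 3]→ₗ[R] N) :
    curryAlternating f ∈ alternatingTrilinear R V N := by
  refine ⟨fun x y => ?_, fun x y => ?_⟩ <;> rw [curryAlternating_apply]
  · exact f.map_eq_zero_of_eq _ (i := 1) (j := 2) rfl (by decide)
  · exact f.map_eq_zero_of_eq _ (i := 0) (j := 2) rfl (by decide)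

variable (R V N) in
/-- Uncurrying, as a linear equivalence between the two encodings of alternating trilinear maps. -/
def alternatingTrilinearEquiv : alternatingTrilinear R V N ≃ₗ[R] V [⋀^Fin 3]→ₗ[R] N where
  toFun := uncurryAlternating
  map_add' _ _ := rfl
  map_smul' _ _ := rfl
  invFun f := ⟨curryAlternating f, curryAlternating_mem f⟩
  left_inv T := by
    ext x y z
    exact curryAlternating_apply _ x y z
  right_inv f := by
    ext v
    exact (curryAlternating_apply f _ _ _).trans (congrArg f (by ext i; fin_cases i <;> rfl))

lemma finrank_alternatingMap [Nontrivial R] [Module.Free R V] [Module.Finite R V]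
    [Module.Free R N] [Module.Finite R N] (p : ℕ) :
    Module.finrank R (V [⋀^Fin p]→ₗ[R] N) =
      (Module.finrank R V).choose p * Module.finrank R N := by
  rw [exteriorPower.alternatingMapLinearEquiv.finrank_eq, Module.finrank_linearMap,
    exteriorPower.finrank_eq]

lemma cyclic_sum_eq_zero_of_apply_self_eq_zero [Invertible (2 : R)]
    {T : V →ₗ[R] V →ₗ[R] V →ₗ[R] N} (hT : ∀ x, T x x x = 0) (x y : V) :
    T x x y + T x y x + T y x x = 0 := by
  have hadd : T (x + y) (x + y) (x + y) = 0 := hT _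
  have hsub : T (x - y) (x - y) (x - y) = 0 := hT _
  simp only [map_add, map_sub, LinearMap.add_apply, LinearMap.sub_apply, hT] at hadd hsub
  rw [← (isUnit_of_invertible (2 : R)).smul_eq_zero]
  linear_combination (norm := module) hadd - hsub

/-- A trilinear map skew in its last two arguments that agrees with `T` on the triples `(x, y, x)`
when `T x x x = 0` for all `x`: symmetrize `T` in its outer two arguments, antisymmetrize in the
last two, and divide by the `3` that the polarization of `T x x x = 0` produces. -/
def skewRepresentative [Invertible (3 : R)] (T : V →ₗ[R] V →ₗ[R] V →ₗ[R] N) :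
    V →ₗ[R] V →ₗ[R] V →ₗ[R] N :=
  let swapRight (S : V →ₗ[R] V →ₗ[R] V →ₗ[R] N) : V →ₗ[R] V →ₗ[R] V →ₗ[R] N :=
    (LinearMap.lflip (R₀ := R)).toLinearMap ∘ₗ S
  ⅟(3 : R) • (T + swapRight (swapRight T).flip - (swapRight T + (swapRight T).flip))

lemma skewRepresentative_apply [Invertible (3 : R)] (T : V →ₗ[R] V →ₗ[R] V →ₗ[R] N) (x y z : V) :
    skewRepresentative T x y z =
      ⅟(3 : R) • (T x y z + T z y x - (T x z y + T y z x)) :=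
  rfl

lemma skewRepresentative_apply_self_right [Invertible (3 : R)]
    (T : V →ₗ[R] V →ₗ[R] V →ₗ[R] N) (x y : V) : skewRepresentative T x y y = 0 := by
  rw [skewRepresentative_apply, sub_self, smul_zero]

lemma skewRepresentative_apply_self_outer [Invertible (2 : R)] [Invertible (3 : R)]
    {T : V →ₗ[R] V →ₗ[R] V →ₗ[R] N} (hT : ∀ x, T x x x = 0) (x y : V) :
    skewRepresentative T x y x = T x y x := by
  have hcyclic := cyclic_sum_eq_zero_of_apply_self_eq_zero hT x y
  rw [skewRepresentative_apply, invOf_smul_eq_iff]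
  linear_combination (norm := module) -hcyclic

lemma sub_skewRepresentative_mem_alternatingTrilinear_iff [Invertible (2 : R)] [Invertible (3 : R)]
    {S T : V →ₗ[R] V →ₗ[R] V →ₗ[R] N} (hT : ∀ x, T x x x = 0) :
    S - skewRepresentative T ∈ alternatingTrilinear R V N ↔
      (∀ x y, S x y y = 0) ∧ ∀ x y, T x y x = S x y x := by
  simp only [mem_alternatingTrilinear, LinearMap.sub_apply, skewRepresentative_apply_self_right,
    skewRepresentative_apply_self_outer hT, sub_zero, sub_eq_zero, eq_comm (a := T _ _ _)]

end Trilinear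

section Blocks

variable {ι κ μ R : Type*} [CommRing R] [Fintype ι] [Fintype κ] [Fintype μ]

lemma transpose_eq_neg_iff_dotProduct_mulVec_self [Invertible (2 : R)] {M : Matrix κ κ R} :
    Mᵀ = -M ↔ ∀ y, y ⬝ᵥ M *ᵥ y = 0 := by
  classical
  constructor
  · intro hM y
    have hneg : y ⬝ᵥ M *ᵥ y = -(y ⬝ᵥ M *ᵥ y) := by
      conv_lhs => rw [dotProduct_mulVec, ← mulVec_transpose, hM, neg_mulVec, neg_dotProduct,
        dotProduct_comm]
    rw [← (isUnit_of_invertible (2 : R)).mul_right_eq_zero]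
    linear_combination hneg
  · intro hM
    have halt : (Matrix.toLinearMap₂' R M).IsAlt := fun y => by
      rw [Matrix.toLinearMap₂'_apply', hM]
    ext j k
    simpa [Matrix.toLinearMap₂'_apply'] using (halt.neg (Pi.single j 1) (Pi.single k 1)).symm

section BlockTrilinear

variable [DecidableEq κ] [DecidableEq μ]

variable (ι κ μ R) in
/-- The trilinear form `(x, y, z) ↦ ∑ i, x i * yᵀ H_i z` attached to a block matrix `H`. -/
noncomputable def blockTrilinear :
    (ι → Matrix κ μ R) ≃ₗ[R] ((ι → R) →ₗ[R] (κ → R) →ₗ[R] (μ → R) →ₗ[R] R) :=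
  (LinearEquiv.piCongrRight fun _ : ι => (Matrix.toLinearMap₂' R : Matrix κ μ R ≃ₗ[R] _)) ≪≫ₗ
    (Pi.basisFun R ι).constr R

lemma blockTrilinear_apply (H : ι → Matrix κ μ R) (x : ι → R) (y : κ → R) (z : μ → R) :
    blockTrilinear ι κ μ R H x y z = y ⬝ᵥ ∑ i, x i • H i *ᵥ z := by
  simp [blockTrilinear, Module.Basis.constr_apply_fintype, Matrix.toLinearMap₂'_apply',
    dotProduct_sum]

lemma blockTrilinear_apply_self_right_eq_zero_iff [Invertible (2 : R)] {H : ι → Matrix κ κ R} :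
    (∀ x y, blockTrilinear ι κ κ R H x y y = 0) ↔ ∀ i, (H i)ᵀ = -H i := by
  simp only [transpose_eq_neg_iff_dotProduct_mulVec_self, blockTrilinear_apply, dotProduct_sum,
    dotProduct_smul]
  classical
  constructor
  · intro h i y
    simpa [Pi.single_apply] using h (Pi.single i 1) y
  · intro h x y
    simp [h]

lemma blockTrilinear_apply_self_outer_eq_iff [DecidableEq ι] {G H : ι → Matrix κ ι R} :
    (∀ x y, blockTrilinear ι κ ι R G x y x = blockTrilinear ι κ ι R H x y x) ↔
      ∀ x, ∑ i, x i • G i *ᵥ x = ∑ i, x i • H i *ᵥ x := by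
  simp only [blockTrilinear_apply, dotProduct_comm _ (Finset.sum _ _), dotProduct_eq_iff]

end BlockTrilinear

set_option maxSynthPendingDepth 3 in
theorem skew_representations_affine_subspace_general [Nontrivial R] [Invertible (2 : R)]
    [Invertible (3 : R)] (H : ι → Matrix ι ι R) (hH : ∀ x, x ⬝ᵥ ∑ i, x i • H i *ᵥ x = 0) :
    ∃ A : AffineSubspace R (ι → Matrix ι ι R),
      (A : Set (ι → Matrix ι ι R)) =
        {Ht | (∀ i, (Ht i)ᵀ = -Ht i) ∧ ∀ x, ∑ i, x i • H i *ᵥ x = ∑ i, x i • Ht i *ᵥ x} ∧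
      (A : Set (ι → Matrix ι ι R)).Nonempty ∧
      Module.finrank R A.direction = (Fintype.card ι).choose 3 := by
  classical
  let Φ := blockTrilinear ι ι ι R
  have hΦ : ∀ x, Φ H x x x = 0 := fun x => (blockTrilinear_apply H x x x).trans (hH x)
  let D := (alternatingTrilinear R (ι → R) R).comap Φ.toLinearMap
  refine ⟨AffineSubspace.mk' (Φ.symm (skewRepresentative (Φ H))) D, ?_,
    AffineSubspace.mk'_nonempty _ _, ?_⟩
  · ext Ht
    calc Ht ∈ AffineSubspace.mk' (Φ.symm (skewRepresentative (Φ H))) D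
      _ ↔ Φ Ht - skewRepresentative (Φ H) ∈ alternatingTrilinear R (ι → R) R := by
        rw [AffineSubspace.mem_mk', Submodule.mem_comap, vsub_eq_sub, LinearEquiv.coe_coe,
          map_sub, Φ.apply_symm_apply]
      _ ↔ (∀ x y, Φ Ht x y y = 0) ∧ ∀ x y, Φ H x y x = Φ Ht x y x :=
        sub_skewRepresentative_mem_alternatingTrilinear_iff hΦ
      _ ↔ (∀ i, (Ht i)ᵀ = -Ht i) ∧ ∀ x, ∑ i, x i • H i *ᵥ x = ∑ i, x i • Ht i *ᵥ x :=
        and_congr blockTrilinear_apply_self_right_eq_zero_iff blockTrilinear_apply_self_outer_eq_iff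
  · rw [AffineSubspace.direction_mk', (Φ.ofSubmodule' _).finrank_eq,
      (alternatingTrilinearEquiv R (ι → R) R).finrank_eq, finrank_alternatingMap,
      Module.finrank_fintype_fun_eq_card, Module.finrank_self, mul_one]

end Blocks

lemma choose_three_right (n : ℕ) : n.choose 3 = n * (n - 1) * (n - 2) / 6 := by
  rw [Nat.choose_eq_descFactorial_div_factorial]
  simp [Nat.descFactorial, Nat.factorial, mul_comm]

lemma quadMap_eq_sum_smul_mulVec {n : ℕ} (H : Fin n → Matrix (Fin n) (Fin n) ℝ) (x : Fin n → ℝ) :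
    quadMap H x = ∑ i, x i • H i *ᵥ x := by
  ext j
  simp [quadMap, mulVec, dotProduct, Finset.mul_sum, mul_left_comm]

/-- The set of skew-block matrices `H̃` equivalent to an energy-preserving `H` is a
nonempty affine subspace of dimension `n(n−1)(n−2)/6 = n³/6 − n²/2 + n/3`. -/
theorem skew_representations_affine_subspace {n : ℕ}
    (H : Fin n → Matrix (Fin n) (Fin n) ℝ) (hH : EnergyPreserving H) :
    ∃ A : AffineSubspace ℝ (Fin n → Matrix (Fin n) (Fin n) ℝ),
      (A : Set (Fin n → Matrix (Fin n) (Fin n) ℝ)) =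
        {Ht | (∀ i, (Ht i)ᵀ = -(Ht i)) ∧ ∀ x : Fin n → ℝ, quadMap H x = quadMap Ht x} ∧
      (A : Set (Fin n → Matrix (Fin n) (Fin n) ℝ)).Nonempty ∧
      Module.finrank ℝ A.direction = n * (n - 1) * (n - 2) / 6 := by
  simp only [quadMap_eq_sum_smul_mulVec, ← choose_three_right]
  simpa using skew_representations_affine_subspace_general H fun x => by
    rw [← quadMap_eq_sum_smul_mulVec]; exact hH x
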